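/- Let X be a real inner product space with norm ‖·‖_X, let W ⊆ X be a subspace equipped with a norm ‖·‖_W, and let λ₁ > 0 and 0 < ν ≤ 1 satisfy λ₁·ν·‖w‖_X² ≤ ‖w‖_W² for all w ∈ W. Let Δt > 0 and suppose elements uⁿ, uⁿ⁺¹, ūⁿ, ūⁿ⁺¹ ∈ W and fⁿ, f̄ⁿ⁺¹ ∈ X satisfy: (i) the predictor energy equation (1/Δt)·⟨ūⁿ⁺¹ − uⁿ, uⁿ⟩ + ‖uⁿ‖_W² = ⟨fⁿ, uⁿ⟩; (ii) the corrector energy equation (1/Δt)·⟨2uⁿ⁺¹ − ūⁿ⁺¹ − uⁿ, ūⁿ⁺¹⟩ + ‖ūⁿ⁺¹‖_W² = ⟨f̄ⁿ⁺¹, ūⁿ⁺¹⟩; (iii) the midpoint relations ūⁿ⁺¹ = (uⁿ⁺¹ + uⁿ)/2 and uⁿ = (ūⁿ⁺¹ + ūⁿ)/2. Then the one-step stability inequality holds: 3·(‖uⁿ⁺¹‖_X² − ‖uⁿ‖_X²) + ‖ūⁿ⁺¹‖_X² − ‖ūⁿ‖_X² + 2νΔt·(‖uⁿ‖_W² + ‖ūⁿ⁺¹‖_W²)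 ≤ (2Δt/(λ₁ν²))·(‖f̄ⁿ⁺¹‖_X² + ‖fⁿ‖_X²). (Abstract form of the per-step estimate (16*) in the proof of Lemma 1.) -/

import Mathlib

open scoped RealInnerProductSpace

/-!
The midpoint relations turn both energy equations into exact increments: since
`4⟪x - m, m⟫ = ‖x‖² - ‖y‖²` for the midpoint `m` of `x` and `y`, the predictor equation measures
`‖ūⁿ⁺¹‖² - ‖ūⁿ‖²` and, because `2uⁿ⁺¹ - ūⁿ⁺¹ - uⁿ = 3(uⁿ⁺¹ - ūⁿ⁺¹)`, the corrector equation measures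
`3(‖uⁿ⁺¹‖² - ‖uⁿ‖²)`. Young's inequality, weighted by the Poincaré constant, then absorbs the work
of each force into half of the corresponding dissipation. Since `ν ≤ 1`, the resulting
estimate, with Poincaré constant `λ₁ν`, only gets weaker when the dissipation is multiplied by `ν`
and the right-hand side divided by it.
-/

section MacCormack

variable {X : Type*} [SeminormedAddCommGroup X] [InnerProductSpace ℝ X]

theorem four_mul_inner_sub_midpoint {x y m : X} (hm : m = (2 : ℝ)⁻¹ • (x + y)) :
    4 * ⟪x - m, m⟫ = ‖x‖ ^ 2 - ‖y‖ ^ 2 := by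
  obtain rfl : y = (2 : ℝ) • m - x := by rw [hm]; module
  rw [norm_sub_sq_real, norm_smul, real_inner_smul_left, inner_sub_left,
    real_inner_self_eq_norm_sq, real_inner_comm x m, Real.norm_ofNat]
  ring

theorem two_mul_inner_le_norm_sq_div_add {c d : ℝ} {w : X} (hc : 0 < c) (hd : c * ‖w‖ ^ 2 ≤ d)
    (f : X) : 2 * ⟪f, w⟫ ≤ ‖f‖ ^ 2 / c + d := by
  calc
    2 * ⟪f, w⟫ ≤ 2 * ‖w‖ * ‖f‖ := by linarith [real_inner_le_norm f w]
    _ ≤ c * ‖w‖ ^ 2 + c⁻¹ * ‖f‖ ^ 2 := two_mul_le_add_mul_sq hc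
    _ ≤ ‖f‖ ^ 2 / c + d := by rw [div_eq_inv_mul]; linarith

-- `u, u', v, v'` are `uⁿ, uⁿ⁺¹, ūⁿ, ūⁿ⁺¹`, and `d, e` are the dissipations `‖uⁿ‖_W², ‖ūⁿ⁺¹‖_W²`.
variable {Δt d e : ℝ} {u u' v v' f g : X}

theorem predictor_energy_balance (hΔt : Δt ≠ 0)
    (hpred : (1 / Δt) * ⟪v' - u, u⟫ + d = ⟪f, u⟫) (hmid : u = (2 : ℝ)⁻¹ • (v' + v)) :
    ‖v'‖ ^ 2 - ‖v‖ ^ 2 + 4 * Δt * d = 4 * Δt * ⟪f, u⟫ := by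
  rw [← four_mul_inner_sub_midpoint hmid, ← hpred]
  field_simp

theorem corrector_energy_balance (hΔt : Δt ≠ 0)
    (hcorr : (1 / Δt) * ⟪(2 : ℝ) • u' - v' - u, v'⟫ + e = ⟪g, v'⟫)
    (hmid : v' = (2 : ℝ)⁻¹ • (u' + u)) :
    3 * (‖u'‖ ^ 2 - ‖u‖ ^ 2) + 4 * Δt * e = 4 * Δt * ⟪g, v'⟫ := by
  have hincrement : (2 : ℝ) • u' - v' - u = (3 : ℝ) • (u' - v') := by rw [hmid]; module
  rw [← four_mul_inner_sub_midpoint hmid, ← hcorr, hincrement, real_inner_smul_left]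
  field_simp

theorem stmt_3_general {c : ℝ} (hc : 0 < c) (hd : c * ‖u‖ ^ 2 ≤ d) (he : c * ‖v'‖ ^ 2 ≤ e)
    (hΔt : 0 < Δt)
    (hpred : (1 / Δt) * ⟪v' - u, u⟫ + d = ⟪f, u⟫)
    (hcorr : (1 / Δt) * ⟪(2 : ℝ) • u' - v' - u, v'⟫ + e = ⟪g, v'⟫)
    (hmid1 : v' = (2 : ℝ)⁻¹ • (u' + u)) (hmid2 : u = (2 : ℝ)⁻¹ • (v' + v)) :
    3 * (‖u'‖ ^ 2 - ‖u‖ ^ 2) + ‖v'‖ ^ 2 - ‖v‖ ^ 2 + 2 * Δt * (d + e)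
      ≤ 2 * Δt / c * (‖g‖ ^ 2 + ‖f‖ ^ 2) := by
  have hforce : 2 * ⟪f, u⟫ + 2 * ⟪g, v'⟫ ≤ (‖f‖ ^ 2 / c + d) + (‖g‖ ^ 2 / c + e) :=
    add_le_add (two_mul_inner_le_norm_sq_div_add hc hd f)
      (two_mul_inner_le_norm_sq_div_add hc he g)
  calc
    3 * (‖u'‖ ^ 2 - ‖u‖ ^ 2) + ‖v'‖ ^ 2 - ‖v‖ ^ 2 + 2 * Δt * (d + e)
      = 2 * Δt * (2 * ⟪f, u⟫ + 2 * ⟪g, v'⟫) - 2 * Δt * (d + e) := by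
        linarith [predictor_energy_balance hΔt.ne' hpred hmid2,
          corrector_energy_balance hΔt.ne' hcorr hmid1]
    _ ≤ 2 * Δt * ((‖f‖ ^ 2 / c + d) + (‖g‖ ^ 2 / c + e)) - 2 * Δt * (d + e) := by gcongr
    _ = 2 * Δt / c * (‖g‖ ^ 2 + ‖f‖ ^ 2) := by ring

end MacCormack

/-- Abstract one-step stability inequality (16*) for the explicit MacCormack scheme. -/
theorem stmt_3 {X : Type*} [NormedAddCommGroup X] [InnerProductSpace ℝ X]
    (W : Submodule ℝ X) (nW : W → ℝ) (lam ν : ℝ) (hlam : 0 < lam)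
    (hν0 : 0 < ν) (hν1 : ν ≤ 1)
    (hPoincare : ∀ w : W, lam * ν * ‖(w : X)‖ ^ 2 ≤ (nW w) ^ 2)
    (Δt : ℝ) (hΔt : 0 < Δt)
    (un un1 ubn ubn1 : W) (fn fbn1 : X)
    (hpred : (1 / Δt) * ⟪(ubn1 : X) - (un : X), (un : X)⟫ + (nW un) ^ 2
        = ⟪fn, (un : X)⟫)
    (hcorr : (1 / Δt) * ⟪(2:ℝ) • (un1 : X) - (ubn1 : X) - (un : X), (ubn1 : X)⟫
          + (nW ubn1) ^ 2
        = ⟪fbn1, (ubn1 : X)⟫)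
    (hmid1 : ubn1 = (2:ℝ)⁻¹ • (un1 + un))
    (hmid2 : un = (2:ℝ)⁻¹ • (ubn1 + ubn)) :
    3 * (‖(un1 : X)‖ ^ 2 - ‖(un : X)‖ ^ 2) + ‖(ubn1 : X)‖ ^ 2 - ‖(ubn : X)‖ ^ 2
        + 2 * ν * Δt * ((nW un) ^ 2 + (nW ubn1) ^ 2)
      ≤ (2 * Δt / (lam * ν ^ 2)) * (‖fbn1‖ ^ 2 + ‖fn‖ ^ 2) := by
  have hsharp := stmt_3_general (mul_pos hlam hν0) (hPoincare un) (hPoincare ubn1) hΔt hpred hcorr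
    (congrArg Subtype.val hmid1) (congrArg Subtype.val hmid2)
  refine le_trans ?_ (hsharp.trans ?_)
  · gcongr
    exact mul_le_of_le_one_right zero_le_two hν1
  · gcongr
    exact pow_le_of_le_one hν0.le hν1 two_ne_zero
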